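/- In the CreditRisk⁺ model, for every j = 1,…,k and every real z with 0 < z < ρ_g, the probability generating functions at the original and shifted parameters are related by g_{α(j)}(z) = g_α(z) / (1 + β_j − β_j Σ_{h=1}^n r_{j,h} z^{ν_h}), where g_α(z) = E_α[z^L] and g_{α(j)}(z) = E_{α(j)}[z^L]. -/

import Mathlib

open MeasureTheory ProbabilityTheory Real

noncomputable section

/-- The gamma measure is sigma-finite (needed to form product measures). -/
instance gammaMeasure.instSigmaFinite (a r : ℝ) :
    SigmaFinite (gammaMeasure a r) := by
  unfold ProbabilityTheory.gammaMeasure ProbabilityTheory.gammaPDF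
  infer_instance

/-- Conditional Poisson intensity `R_i(s) = r_{0,i} S_0 + sum_j r_{j,i} s_j`. -/
def crpR {n k : ℕ} (S0 : ℝ) (r0 : Fin n → ℝ) (r : Fin k → Fin n → ℝ)
    (s : Fin k → ℝ) (i : Fin n) : ℝ :=
  r0 i * S0 + ∑ j, r j i * s j

/-- The CreditRisk⁺ measure `P_α` on `(Fin k → ℝ) × (Fin n → ℕ)`: the product of the
Gamma factor measures (shape `α j`, scale `β j`, i.e. rate `(β j)⁻¹`), composed with the
kernel sending the factor vector `s` to the product of Poisson measures with means `R_i(s)`,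
recorded jointly with `s`. -/
def crpMeasure {n k : ℕ} (S0 : ℝ) (r0 : Fin n → ℝ) (r : Fin k → Fin n → ℝ)
    (α β : Fin k → ℝ) : Measure ((Fin k → ℝ) × (Fin n → ℕ)) :=
  (Measure.pi fun j => gammaMeasure (α j) (β j)⁻¹).bind fun s =>
    (Measure.pi fun i => poissonMeasure (crpR S0 r0 r s i).toNNReal).map fun x => (s, x)

/-- Portfolio loss `L = ∑ ν_i N_i`. -/
def crpLoss {n k : ℕ} (ν : Fin n → ℕ) (x : (Fin k → ℝ) × (Fin n → ℕ)) : ℕ :=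
  ∑ i, ν i * x.2 i

/-- Value-at-risk of the ℕ-valued loss `L` at level `δ`: the smallest `l` with
`P[L ≤ l] ≥ δ` (a natural number since `L` is ℕ-valued). -/
def crpVaR {n k : ℕ} (P : Measure ((Fin k → ℝ) × (Fin n → ℕ)))
    (ν : Fin n → ℕ) (δ : ℝ) : ℕ :=
  sInf {l : ℕ | ENNReal.ofReal δ ≤ P {x | crpLoss ν x ≤ l}}

/-- `ρ_g`, the radius of convergence of the probability generating function. -/
def crpRadius {n k : ℕ} (ν : Fin n → ℕ) (r : Fin k → Fin n → ℝ) (β : Fin k → ℝ) : ℝ :=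
  sSup {z : ℝ | 0 < z ∧ ∀ j, ∑ i, r j i * z ^ ν i < 1 + (β j)⁻¹}

/-- The Poisson probability generating function. -/
lemma lintegral_pow_poissonMeasure (l : NNReal) {w : ℝ} (hw : 0 ≤ w) :
    ∫⁻ m, ENNReal.ofReal (w ^ m) ∂(poissonMeasure l) =
      ENNReal.ofReal (exp (l * (w - 1))) := by
  have hsum : HasSum (fun m : ℕ => w ^ m * (exp (-(l : ℝ)) * (l : ℝ) ^ m / (m.factorial : ℝ)))
      (exp (l * (w - 1))) := by
    have h := (NormedSpace.expSeries_div_hasSum_exp (w * (l : ℝ))).mul_left (exp (-(l : ℝ)))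
    rw [← Real.exp_eq_exp_ℝ, ← Real.exp_add] at h
    have hexp : (l : ℝ) * (w - 1) = -(l : ℝ) + w * l := by ring
    rw [hexp]
    refine Eq.mp (congrArg (HasSum · _) (funext fun m => ?_)) h
    rw [mul_pow]
    ring
  rw [lintegral_countable', ← hsum.tsum_eq,
    ENNReal.ofReal_tsum_of_nonneg (fun m => by positivity) hsum.summable]
  refine tsum_congr fun m => ?_
  rw [poissonMeasure_singleton, ENNReal.ofReal_mul (by positivity)]

/-- The moment generating function of the Gamma distribution. -/
lemma lintegral_exp_mul_gammaMeasure {a b t : ℝ} (ha : 0 < a) (hb : 0 < b) (ht : t < b) :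
    ∫⁻ x, ENNReal.ofReal (exp (t * x)) ∂(gammaMeasure a b) =
      ENNReal.ofReal ((b / (b - t)) ^ a) := by
  have hbt : 0 < b - t := sub_pos.2 ht
  have hpdf : Measurable (gammaPDF a b) := (measurable_gammaPDFReal a b).ennreal_ofReal
  rw [gammaMeasure, lintegral_withDensity_eq_lintegral_mul _ hpdf (by fun_prop)]
  have h : ∀ x, (gammaPDF a b * fun x => ENNReal.ofReal (exp (t * x))) x =
      ENNReal.ofReal ((b / (b - t)) ^ a) * gammaPDF a (b - t) x := by
    intro x
    rcases lt_or_ge x 0 with hx | hx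
    · simp [gammaPDF_of_neg hx]
    · have hG : 0 < Gamma a := Gamma_pos_of_pos ha
      rw [Pi.mul_apply, gammaPDF_of_nonneg hx, gammaPDF_of_nonneg hx,
        ← ENNReal.ofReal_mul (by positivity), ← ENNReal.ofReal_mul (by positivity)]
      congr 1
      have hexp : exp (-((b - t) * x)) = exp (-(b * x)) * exp (t * x) := by
        rw [← Real.exp_add]
        congr 1
        ring
      have hpow : 0 < (b - t) ^ a := by positivity
      rw [Real.div_rpow hb.le hbt.le, hexp]
      field_simp
  rw [lintegral_congr h, lintegral_const_mul' _ _ ENNReal.ofReal_ne_top,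
    lintegral_gammaPDF_eq_one ha hbt, mul_one]

lemma ae_nonneg_gammaMeasure (a b : ℝ) : ∀ᵐ x ∂(gammaMeasure a b), 0 ≤ x := by
  have hpdf : Measurable (gammaPDF a b) := (measurable_gammaPDFReal a b).ennreal_ofReal
  rw [gammaMeasure, ae_withDensity_iff hpdf]
  refine Filter.Eventually.of_forall fun x hx => ?_
  by_contra hneg
  exact hx (gammaPDF_of_neg (not_le.1 hneg))

/-- Tonelli's theorem for a product of functions of separate coordinates. -/
lemma lintegral_pi_prod_eq_prod {ι : Type*} [Fintype ι] {X : ι → Type*}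
    [∀ i, MeasurableSpace (X i)] (μ : ∀ i, Measure (X i)) [∀ i, IsProbabilityMeasure (μ i)]
    {f : ∀ i, X i → ENNReal} (hf : ∀ i, Measurable (f i)) :
    ∫⁻ x, ∏ i, f i (x i) ∂(Measure.pi μ) = ∏ i, ∫⁻ y, f i y ∂(μ i) := by
  refine (lintegral_prod_eq_prod_lintegral_of_indepFun Finset.univ
    (fun i (x : ∀ i, X i) => f i (x i))
    (iIndepFun_pi fun i => (hf i).aemeasurable)
    fun i => (hf i).comp (measurable_pi_apply i)).trans ?_
  exact Finset.prod_congr rfl fun i _ => (measurePreserving_eval μ i).lintegral_comp (hf i)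

lemma measurable_crpKernel {n k : ℕ} (S0 : ℝ) (r0 : Fin n → ℝ) (r : Fin k → Fin n → ℝ) :
    Measurable fun s : Fin k → ℝ =>
      (Measure.pi fun i => poissonMeasure (crpR S0 r0 r s i).toNNReal).map
        fun x : Fin n → ℕ => (s, x) := by
  refine Measure.measurable_of_measurable_coe _ fun B hB => ?_
  have h : ∀ s : Fin k → ℝ,
      (Measure.pi fun i => poissonMeasure (crpR S0 r0 r s i).toNNReal).map
        (fun x : Fin n → ℕ => (s, x)) B =
      ∑' x : Fin n → ℕ, ((fun s' => (s', x)) ⁻¹' B).indicator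
        (fun s' => ∏ i, ENNReal.ofReal (exp (-((crpR S0 r0 r s' i).toNNReal : ℝ)) *
          ((crpR S0 r0 r s' i).toNNReal : ℝ) ^ x i / ((x i).factorial : ℝ))) s := by
    intro s
    rw [Measure.map_apply measurable_prodMk_left hB,
      ← Measure.tsum_indicator_apply_singleton _ _ (measurable_prodMk_left hB)]
    refine tsum_congr fun x => ?_
    simp only [Set.indicator, Set.mem_preimage, Measure.pi_singleton, poissonMeasure_singleton]
    rfl
  simp_rw [h]
  have hR : ∀ i, Measurable fun s : Fin k → ℝ => crpR S0 r0 r s i := fun i => by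
    unfold crpR
    fun_prop
  refine Measurable.tsum fun x => Measurable.indicator ?_ (measurable_prodMk_right hB)
  refine Finset.measurable_prod _ fun i _ => ?_
  have := hR i
  fun_prop

lemma crpR_nonneg {n k : ℕ} {S0 : ℝ} (hS0 : 0 ≤ S0) {r0 : Fin n → ℝ} {r : Fin k → Fin n → ℝ}
    (hr0 : ∀ i, 0 ≤ r0 i) (hr : ∀ j i, 0 ≤ r j i) {s : Fin k → ℝ} (hs : ∀ j, 0 ≤ s j)
    (i : Fin n) : 0 ≤ crpR S0 r0 r s i :=
  add_nonneg (mul_nonneg (hr0 i) hS0) (Finset.sum_nonneg fun j _ => mul_nonneg (hr j i) (hs j))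

/-- The closed form of the probability generating function of the portfolio loss. -/
lemma integral_pow_crpLoss {n k : ℕ} (ν : Fin n → ℕ) {S0 : ℝ} (hS0 : 0 ≤ S0)
    {r0 : Fin n → ℝ} {r : Fin k → Fin n → ℝ} (hr0 : ∀ i, 0 ≤ r0 i) (hr : ∀ j i, 0 ≤ r j i)
    {α β : Fin k → ℝ} (hα : ∀ j, 0 < α j) (hβ : ∀ j, 0 < β j) {z : ℝ} (hz : 0 ≤ z)
    (hzβ : ∀ j, ∑ i, r j i * (z ^ ν i - 1) < (β j)⁻¹) :
    ∫ x, z ^ crpLoss ν x ∂(crpMeasure S0 r0 r α β) =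
      exp (∑ i, r0 i * S0 * (z ^ ν i - 1)) *
        ∏ j, ((β j)⁻¹ / ((β j)⁻¹ - ∑ i, r j i * (z ^ ν i - 1))) ^ α j := by
  have hloss : Measurable fun x : (Fin k → ℝ) × (Fin n → ℕ) => z ^ crpLoss ν x := by
    have : Measurable fun x : (Fin k → ℝ) × (Fin n → ℕ) => crpLoss ν x :=
      (measurable_of_countable fun y : Fin n → ℕ => ∑ i, ν i * y i).comp measurable_snd
    exact (measurable_of_countable fun m : ℕ => z ^ m).comp this
  have hprob : ∀ j, IsProbabilityMeasure (gammaMeasure (α j) (β j)⁻¹) := fun j =>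
    isProbabilityMeasure_gammaMeasure (hα j) (inv_pos.2 (hβ j))
  have hpos : ∀ᵐ s ∂(Measure.pi fun j => gammaMeasure (α j) (β j)⁻¹), ∀ j, 0 ≤ s j :=
    Filter.eventually_all.2 fun j =>
      Measure.tendsto_eval_ae_ae.eventually (ae_nonneg_gammaMeasure (α j) (β j)⁻¹)
  have hcond : ∀ s : Fin k → ℝ, (∀ j, 0 ≤ s j) →
      ∫⁻ x, ENNReal.ofReal (z ^ crpLoss ν x)
        ∂((Measure.pi fun i => poissonMeasure (crpR S0 r0 r s i).toNNReal).map
          fun x : Fin n → ℕ => (s, x)) =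
      ENNReal.ofReal (exp (∑ i, r0 i * S0 * (z ^ ν i - 1))) *
        ∏ j, ENNReal.ofReal (exp ((∑ i, r j i * (z ^ ν i - 1)) * s j)) := by
    intro s hs
    rw [lintegral_map hloss.ennreal_ofReal measurable_prodMk_left]
    have hprod : ∀ x : Fin n → ℕ, ENNReal.ofReal (z ^ crpLoss ν (s, x)) =
        ∏ i, ENNReal.ofReal ((z ^ ν i) ^ x i) := fun x => by
      rw [← ENNReal.ofReal_prod_of_nonneg fun i _ => by positivity]
      simp only [crpLoss, ← pow_mul, Finset.prod_pow_eq_pow_sum]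
    simp_rw [hprod]
    rw [lintegral_pi_prod_eq_prod _ (f := fun i m => ENNReal.ofReal ((z ^ ν i) ^ m))
      fun i => measurable_of_countable _]
    simp_rw [fun i => lintegral_pow_poissonMeasure (crpR S0 r0 r s i).toNNReal
      (pow_nonneg hz (ν i)), Real.coe_toNNReal _ (crpR_nonneg hS0 hr0 hr hs _)]
    rw [← ENNReal.ofReal_prod_of_nonneg fun i _ => (exp_pos _).le,
      ← ENNReal.ofReal_prod_of_nonneg fun i _ => (exp_pos _).le,
      ← ENNReal.ofReal_mul (exp_pos _).le, ← Real.exp_sum, ← Real.exp_sum, ← Real.exp_add]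
    congr 2
    simp only [crpR, add_mul, Finset.sum_add_distrib, Finset.sum_mul]
    rw [Finset.sum_comm]
    congr 1
    exact Finset.sum_congr rfl fun j _ => Finset.sum_congr rfl fun i _ => by ring
  have hfactor : ∀ j, 0 ≤
      ((β j)⁻¹ / ((β j)⁻¹ - ∑ i, r j i * (z ^ ν i - 1))) ^ α j := fun j =>
    Real.rpow_nonneg (div_nonneg (inv_pos.2 (hβ j)).le (sub_pos.2 (hzβ j)).le) _
  rw [integral_eq_lintegral_of_nonneg_ae (Filter.Eventually.of_forall fun x => pow_nonneg hz _)
      hloss.aestronglyMeasurable, crpMeasure,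
    Measure.lintegral_bind (measurable_crpKernel S0 r0 r).aemeasurable
      hloss.ennreal_ofReal.aemeasurable,
    lintegral_congr_ae (hpos.mono hcond), lintegral_const_mul' _ _ ENNReal.ofReal_ne_top,
    lintegral_pi_prod_eq_prod _
      (f := fun j x => ENNReal.ofReal (exp ((∑ i, r j i * (z ^ ν i - 1)) * x)))
      fun j => by fun_prop]
  simp_rw [fun j => lintegral_exp_mul_gammaMeasure (hα j) (inv_pos.2 (hβ j)) (hzβ j)]
  rw [← ENNReal.ofReal_prod_of_nonneg fun j _ => hfactor j, ← ENNReal.ofReal_mul (exp_pos _).le,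
    ENNReal.toReal_ofReal (mul_nonneg (exp_pos _).le (Finset.prod_nonneg fun j _ => hfactor j))]

lemma sum_mul_pow_lt_of_lt_crpRadius {n k : ℕ} {ν : Fin n → ℕ} {r : Fin k → Fin n → ℝ}
    (hr : ∀ j i, 0 ≤ r j i) {β : Fin k → ℝ} {z : ℝ} (hz0 : 0 < z) (hzρ : z < crpRadius ν r β)
    (j : Fin k) : ∑ i, r j i * z ^ ν i < 1 + (β j)⁻¹ := by
  have hne : {z : ℝ | 0 < z ∧ ∀ j, ∑ i, r j i * z ^ ν i < 1 + (β j)⁻¹}.Nonempty := by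
    by_contra h
    rw [crpRadius, Set.not_nonempty_iff_eq_empty.1 h, Real.sSup_empty] at hzρ
    exact hz0.not_gt hzρ
  obtain ⟨w, hw, hzw⟩ := exists_lt_of_lt_csSup hne hzρ
  refine lt_of_le_of_lt (Finset.sum_le_sum fun i _ => ?_) (hw.2 j)
  have := hr j i
  gcongr

/-- for `0 < z < ρ_g` and each sector `j`,
`g_{α(j)}(z) = g_α(z) / (1 + β_j − β_j ∑_h r_{j,h} z^{ν_h})`, where `α(j)` has the `j`-th
shape parameter increased by `1`. -/
theorem crp_pgf_shift {n k : ℕ} (hn : 0 < n) (hk : 0 < k)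
    (ν : Fin n → ℕ) (hν : ∀ i, 0 < ν i)
    (S0 : ℝ) (hS0 : 0 ≤ S0)
    (r0 : Fin n → ℝ) (r : Fin k → Fin n → ℝ)
    (hr0 : ∀ i, 0 ≤ r0 i) (hr : ∀ j i, 0 ≤ r j i)
    (hr0sum : ∑ i, r0 i = 1) (hrsum : ∀ j, ∑ i, r j i = 1)
    (hrpos : ∀ i, 0 < ∑ j, r j i)
    (α β : Fin k → ℝ) (hα : ∀ j, 0 < α j) (hβ : ∀ j, 0 < β j)
    (j : Fin k) (z : ℝ) (hz0 : 0 < z) (hzρ : z < crpRadius ν r β) :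
    ∫ x, z ^ crpLoss ν x ∂(crpMeasure S0 r0 r (Function.update α j (α j + 1)) β)
      = (∫ x, z ^ crpLoss ν x ∂(crpMeasure S0 r0 r α β)) /
        (1 + β j - β j * ∑ h, r j h * z ^ ν h) := by
  have hsub : ∀ l, ∑ i, r l i * (z ^ ν i - 1) = ∑ i, r l i * z ^ ν i - 1 := fun l => by
    simp only [mul_sub, mul_one, Finset.sum_sub_distrib, hrsum]
  have hlt : ∀ l, ∑ i, r l i * (z ^ ν i - 1) < (β l)⁻¹ := fun l => by
    rw [hsub]
    linarith [sum_mul_pow_lt_of_lt_crpRadius hr hz0 hzρ l]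
  have hα' : ∀ l, 0 < Function.update α j (α j + 1) l := fun l => by
    rcases eq_or_ne l j with rfl | hl
    · simpa using (hα l).trans (lt_add_one _)
    · simpa [hl] using hα l
  rw [integral_pow_crpLoss ν hS0 hr0 hr hα' hβ hz0.le hlt,
    integral_pow_crpLoss ν hS0 hr0 hr hα hβ hz0.le hlt, mul_div_assoc]
  congr 1
  rw [← Finset.mul_prod_erase _ _ (Finset.mem_univ j),
    ← Finset.mul_prod_erase _ _ (Finset.mem_univ j)]
  have herase : ∀ l ∈ Finset.univ.erase j,
      ((β l)⁻¹ / ((β l)⁻¹ - ∑ i, r l i * (z ^ ν i - 1))) ^ Function.update α j (α j + 1) l =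
        ((β l)⁻¹ / ((β l)⁻¹ - ∑ i, r l i * (z ^ ν i - 1))) ^ α l := fun l hl => by
    rw [Function.update_of_ne (Finset.ne_of_mem_erase hl)]
  have hdiff : 0 < (β j)⁻¹ - ∑ i, r j i * (z ^ ν i - 1) := sub_pos.2 (hlt j)
  have hratio : (β j)⁻¹ / ((β j)⁻¹ - ∑ i, r j i * (z ^ ν i - 1)) =
      (1 + β j - β j * ∑ h, r j h * z ^ ν h)⁻¹ := by
    rw [div_eq_mul_inv, ← mul_inv, hsub, mul_sub, mul_inv_cancel₀ (hβ j).ne']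
    congr 1
    ring
  rw [Finset.prod_congr rfl herase, Function.update_self,
    Real.rpow_add_one (div_pos (inv_pos.2 (hβ j)) hdiff).ne', hratio]
  ring
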